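/- arXiv:math/0609319 — 2 statements merged into one kernel-verified Lean document; each statement's English description precedes it below -/
import Mathlib

section
/- Let W be a finite-dimensional real vector space with split nondegenerate symmetric bilinear form and let the Clifford algebra Cl(W) have relations w² = B(w,w)·1. For a Lagrangian subspace E ⊂ W, the left ideal Cl(W)·E generated by E is a maximal left ideal of Cl(W). -/
/-!
Write `I = Cl(Q)·E`. The generators of `I` anticommute and square to zero. If `1 ∈ I`, then `1` is
already in the left ideal of finitely many of them; but these all annihilate, by left
multiplication, a longest nonzero product of distinct ones among them, and then so does `1`.

For maximality, `e ∈ E` acts on `Cl(Q) / I` by contraction with the functional `polar Q e`, because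
`e x = involute x * e + (polar Q e)⌋x`. Let `J ⊇ I` be a proper left ideal. To see that `a ∈ J`
lies in `I`, write `a` as a polynomial in `E` and finitely many further vectors, and remove these
vectors one at a time. A vector in the span of `E` and the others can simply be dropped. Otherwise
write `a = b + w c`, where `w` is the vector to remove and `b`, `c` are polynomials in the others.
Since `E = E^⊥`, some `e ∈ E` is orthogonal to the others but not to `w`, so that
`e a ≡ polar Q e w • c` modulo `I`. Hence `c ∈ J`, by induction `c ∈ I`, therefore `b ∈ J`, and
`b ∈ I` by induction again. What remains in the end is a polynomial in `E`; it is congruent to a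
scalar modulo `I`, and `J` contains no scalar but `0`.
-/

section Algebra

variable {R A : Type*} [CommSemiring R] [Semiring A] [Algebra R A]

theorem adjoin_toSubmodule_le_of_mul_mem {s : Set A} {p : Submodule R A} (one_mem : 1 ∈ p)
    (mul_mem : ∀ x ∈ s, ∀ y ∈ p, x * y ∈ p) : (Algebra.adjoin R s).toSubmodule ≤ p := by
  rw [Algebra.adjoin_eq_span, Submodule.span_le]
  intro x hx
  induction hx using Submonoid.closure_induction_left with
  | one => exact one_mem
  | mul_left x hx y _ hy => exact mul_mem x hx y hy

end Algebra

section Anticommuting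

variable {A : Type*} [Ring A] [Nontrivial A]

theorem exists_ne_zero_forall_mul_eq_zero_of_anticommute {s : Set A} (hs : s.Finite)
    (hsq : ∀ a ∈ s, a * a = 0) (hanti : ∀ a ∈ s, ∀ b ∈ s, a * b = -(b * a)) :
    ∃ y : A, y ≠ 0 ∧ ∀ a ∈ s, a * y = 0 := by
  induction s, hs using Set.Finite.induction_on with
  | empty => exact ⟨1, one_ne_zero, by simp⟩
  | @insert a s _ _ ih =>
    simp only [Set.forall_mem_insert] at hsq hanti ⊢
    obtain ⟨y, hy, hsy⟩ := ih hsq.2 fun b hb => (hanti.2 b hb).2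
    by_cases hay : a * y = 0
    · exact ⟨y, hy, hay, hsy⟩
    · refine ⟨a * y, hay, by rw [← mul_assoc, hsq.1, zero_mul], fun b hb => ?_⟩
      rw [← mul_assoc, (hanti.2 b hb).1, neg_mul, mul_assoc, hsy b hb, mul_zero, neg_zero]

theorem span_ne_top_of_anticommute {s : Set A} (hsq : ∀ a ∈ s, a * a = 0)
    (hanti : ∀ a ∈ s, ∀ b ∈ s, a * b = -(b * a)) : Submodule.span A s ≠ ⊤ := by
  intro htop
  obtain ⟨t, hts, h1⟩ := Submodule.mem_span_finite_of_mem_span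
    (htop ▸ Submodule.mem_top : (1 : A) ∈ Submodule.span A s)
  obtain ⟨y, hy, hty⟩ := exists_ne_zero_forall_mul_eq_zero_of_anticommute t.finite_toSet
    (fun a ha => hsq a (hts ha)) (fun a ha b hb => hanti a (hts ha) b (hts hb))
  have hle : Submodule.span A t ≤ LinearMap.ker (LinearMap.toSpanSingleton A A y) :=
    Submodule.span_le.2 fun a ha => by simpa using hty a ha
  exact hy (by simpa using hle h1)

end Anticommuting

section BilinForm

open LinearMap (BilinForm)

variable {K V : Type*} [Field K] [AddCommGroup V] [Module K V]

theorem exists_apply_ne_zero_of_notMem_orthogonalBilin_sup_span (B : BilinForm K V)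
    {E : Submodule K V} {t : Set V} (ht : t.Finite) {w : V}
    (hw : w ∉ E.orthogonalBilin B ⊔ Submodule.span K t) :
    ∃ e ∈ E, (∀ v ∈ t, B e v = 0) ∧ B e w ≠ 0 := by
  contrapose! hw
  have : Finite t := ht
  let φ : V →ₗ[K] Module.Dual K E := (B.domRestrict E).flip
  have hφ : φ w ∈ Submodule.span K (Set.range fun v : t => φ v) := by
    refine mem_span_of_iInf_ker_le_ker fun e he => hw e e.2 fun v hv => ?_
    exact (Submodule.mem_iInf _).1 he ⟨v, hv⟩
  rw [← Set.image_eq_range, Submodule.span_image] at hφ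
  obtain ⟨u, hu, huw⟩ := hφ
  refine Submodule.mem_sup.2 ⟨w - u, fun e he => ?_, u, hu, sub_add_cancel w u⟩
  rw [map_sub, sub_eq_zero]
  exact (LinearMap.congr_fun huw ⟨e, he⟩).symm

theorem polarBilin_half_smul_toQuadraticMap [NeZero (2 : K)] {B : BilinForm K V} (hB : B.IsSymm) :
    (((1 / 2 : K) • B).toQuadraticMap).polarBilin = B := by
  ext v w
  have hvw : B w v = B v w := hB.eq w v
  rw [LinearMap.BilinMap.polarBilin_toQuadraticMap]
  simp [hvw, ← two_mul, two_ne_zero]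

end BilinForm

section Clifford

open CliffordAlgebra QuadraticMap

section CommRing

variable {R M : Type*} [CommRing R] [AddCommGroup M] [Module R M] {Q : QuadraticForm R M}

variable (Q) in
theorem nontrivial_cliffordAlgebra [Nontrivial R] [Module.Free R M] :
    Nontrivial (CliffordAlgebra Q) := by
  obtain ⟨B, hB⟩ := LinearMap.BilinMap.toQuadraticMap_surjective (0 - Q)
  have : Nontrivial (CliffordAlgebra (0 : QuadraticForm R M)) :=
    inferInstanceAs (Nontrivial (ExteriorAlgebra R M))
  exact (changeFormEquiv hB).toEquiv.nontrivial

theorem ι_mul_eq_involute_mul_add_contractLeft (v : M) (x : CliffordAlgebra Q) :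
    ι Q v * x = involute x * ι Q v + contractLeft (polarBilin Q v) x := by
  induction x using left_induction with
  | algebraMap r => simp [Algebra.commutes]
  | add x y hx hy => rw [mul_add, hx, hy, map_add, map_add, add_mul]; abel
  | ι_mul x u hx =>
    rw [← mul_assoc, ι_mul_ι_comm, sub_mul, mul_assoc, hx, contractLeft_ι_mul, map_mul,
      involute_ι, ← Algebra.smul_def, polarBilin_apply_apply]
    noncomm_ring

theorem contractLeft_eq_zero_of_mem_adjoin {d : Module.Dual R M} {s : Set M}
    (hd : ∀ v ∈ s, d v = 0) {x : CliffordAlgebra Q} (hx : x ∈ Algebra.adjoin R (ι Q '' s)) :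
    contractLeft d x = 0 := by
  suffices (Algebra.adjoin R (ι Q '' s)).toSubmodule ≤ LinearMap.ker (contractLeft (Q := Q) d) from
    this hx
  refine adjoin_toSubmodule_le_of_mul_mem (contractLeft_one Q d) ?_
  rintro _ ⟨v, hv, rfl⟩ y hy
  rw [LinearMap.mem_ker] at hy ⊢
  rw [contractLeft_ι_mul, hd v hv, hy, zero_smul, mul_zero, sub_zero]

theorem exists_add_ι_mul_eq_of_mem_adjoin_insert {s : Set M} {w : M} {x : CliffordAlgebra Q}
    (hx : x ∈ Algebra.adjoin R (ι Q '' insert w s)) :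
    ∃ b ∈ Algebra.adjoin R (ι Q '' s), ∃ c ∈ Algebra.adjoin R (ι Q '' s), b + ι Q w * c = x := by
  set S := Algebra.adjoin R (ι Q '' s)
  let p := S.toSubmodule ⊔ S.toSubmodule.map (LinearMap.mulLeft R (ι Q w))
  have mem_p {y} : y ∈ p ↔ ∃ b ∈ S, ∃ c ∈ S, b + ι Q w * c = y := by
    simp [p, Submodule.mem_sup]
  suffices (Algebra.adjoin R (ι Q '' insert w s)).toSubmodule ≤ p from mem_p.1 (this hx)
  refine adjoin_toSubmodule_le_of_mul_mem (Submodule.mem_sup_left S.one_mem) ?_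
  rintro _ ⟨v, hv, rfl⟩ y hy
  obtain ⟨b, hb, c, hc, rfl⟩ := mem_p.1 hy
  rcases hv with rfl | hv
  · refine mem_p.2 ⟨Q v • c, S.smul_mem hc _, b, hb, ?_⟩
    rw [mul_add, ← mul_assoc, ι_sq_scalar, Algebra.smul_def, add_comm]
  · have hvS : ι Q v ∈ S := Algebra.subset_adjoin ⟨v, hv, rfl⟩
    refine mem_p.2 ⟨ι Q v * b + polar Q v w • c, S.add_mem (S.mul_mem hvS hb) (S.smul_mem hc _),
      -(ι Q v * c), S.neg_mem (S.mul_mem hvS hc), ?_⟩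
    rw [mul_add, ← mul_assoc (ι Q v) (ι Q w), ι_mul_ι_comm, Algebra.smul_def]
    noncomm_ring

theorem adjoin_ι_image_insert_le_of_mem_span {s : Set M} {w : M} (hw : w ∈ Submodule.span R s) :
    Algebra.adjoin R (ι Q '' insert w s) ≤ Algebra.adjoin R (ι Q '' s) := by
  have hιw : ι Q w ∈ Submodule.span R (ι Q '' s) := by
    rw [Submodule.span_image]
    exact Submodule.mem_map_of_mem hw
  rw [Set.image_insert_eq]
  exact Algebra.adjoin_le
    (Set.insert_subset (Algebra.span_le_adjoin R _ hιw) Algebra.subset_adjoin)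

theorem exists_finite_mem_adjoin_ι_image (x : CliffordAlgebra Q) :
    ∃ t : Set M, t.Finite ∧ x ∈ Algebra.adjoin R (ι Q '' t) := by
  have adjoin_mono {s t : Set M} (h : s ⊆ t) :
      Algebra.adjoin R (ι Q '' s) ≤ Algebra.adjoin R (ι Q '' t) :=
    Algebra.adjoin_mono (Set.image_mono h)
  induction x using left_induction with
  | algebraMap r => exact ⟨∅, Set.finite_empty, Subalgebra.algebraMap_mem _ r⟩
  | add x y hx hy =>
    obtain ⟨s, hs, hxs⟩ := hx
    obtain ⟨t, ht, hyt⟩ := hy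
    exact ⟨s ∪ t, hs.union ht, add_mem (adjoin_mono Set.subset_union_left hxs)
      (adjoin_mono Set.subset_union_right hyt)⟩
  | ι_mul x w hx =>
    obtain ⟨t, ht, hxt⟩ := hx
    exact ⟨insert w t, ht.insert w,
      mul_mem (Algebra.subset_adjoin ⟨w, Set.mem_insert w t, rfl⟩)
        (adjoin_mono (Set.subset_insert w t) hxt)⟩

theorem le_orthogonalBilin_of_isotropic {E : Submodule R M} (hQ : ∀ e ∈ E, Q e = 0) :
    E ≤ E.orthogonalBilin Q.polarBilin := fun v hv u hu => by
  simp [polar, hQ _ hu, hQ _ hv, hQ _ (E.add_mem hu hv)]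

/-- The left ideal `Cl(Q)·E` of the Clifford algebra generated by a submodule `E`. In the quotient
by it, `E` acts by annihilation operators, with the class of `1` as vacuum vector. -/
def cliffordLeftIdeal (Q : QuadraticForm R M) (E : Submodule R M) :
    Submodule (CliffordAlgebra Q) (CliffordAlgebra Q) :=
  Submodule.span (CliffordAlgebra Q) (ι Q '' (E : Set M))

namespace cliffordLeftIdeal

variable {E : Submodule R M}

theorem ι_mem {e : M} (he : e ∈ E) : ι Q e ∈ cliffordLeftIdeal Q E :=
  Submodule.subset_span ⟨e, he, rfl⟩

theorem ne_top_of_isotropic [Nontrivial (CliffordAlgebra Q)] (hQ : ∀ e ∈ E, Q e = 0) :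
    cliffordLeftIdeal Q E ≠ ⊤ := by
  refine span_ne_top_of_anticommute ?_ ?_
  · rintro _ ⟨e, he, rfl⟩
    rw [ι_sq_scalar, hQ e he, map_zero]
  · rintro _ ⟨u, hu, rfl⟩ _ ⟨v, hv, rfl⟩
    have hpolar : polar Q u v = 0 := le_orthogonalBilin_of_isotropic hQ hv u hu
    rw [ι_mul_ι_comm, hpolar, map_zero, zero_sub]

theorem ι_mul_sub_contractLeft_mem {e : M} (he : e ∈ E) (x : CliffordAlgebra Q) :
    ι Q e * x - contractLeft (polarBilin Q e) x ∈ cliffordLeftIdeal Q E := by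
  rw [ι_mul_eq_involute_mul_add_contractLeft, add_sub_cancel_right]
  exact Submodule.smul_mem _ (involute x) (ι_mem he)

theorem exists_sub_algebraMap_mem {x : CliffordAlgebra Q}
    (hx : x ∈ Algebra.adjoin R (ι Q '' (E : Set M))) :
    ∃ r, x - algebraMap R _ r ∈ cliffordLeftIdeal Q E := by
  let p : Submodule R (CliffordAlgebra Q) := 1 ⊔ (cliffordLeftIdeal Q E).restrictScalars R
  suffices (Algebra.adjoin R (ι Q '' (E : Set M))).toSubmodule ≤ p by
    obtain ⟨_, hr, y, hy, rfl⟩ := Submodule.mem_sup.1 (this hx)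
    obtain ⟨r, rfl⟩ := Submodule.mem_one.1 hr
    exact ⟨r, by rwa [add_sub_cancel_left]⟩
  refine adjoin_toSubmodule_le_of_mul_mem
    (Submodule.mem_sup_left (Submodule.one_le.1 le_rfl)) ?_
  rintro _ ⟨e, he, rfl⟩ y hy
  obtain ⟨_, hr, z, hz, rfl⟩ := Submodule.mem_sup.1 hy
  obtain ⟨r, rfl⟩ := Submodule.mem_one.1 hr
  refine Submodule.mem_sup_right ?_
  rw [mul_add, ← Algebra.commutes]
  exact add_mem ((cliffordLeftIdeal Q E).smul_mem _ (ι_mem he))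
    ((cliffordLeftIdeal Q E).smul_mem (ι Q e) hz)

end cliffordLeftIdeal

end CommRing

namespace cliffordLeftIdeal

variable {K V : Type*} [Field K] [AddCommGroup V] [Module K V] {Q : QuadraticForm K V}
  {E : Submodule K V} {J : Submodule (CliffordAlgebra Q) (CliffordAlgebra Q)}
  (hIJ : cliffordLeftIdeal Q E ≤ J)

include hIJ

theorem mem_of_mem_adjoin_of_mem (hJ : J ≠ ⊤) {a : CliffordAlgebra Q}
    (ha : a ∈ Algebra.adjoin K (ι Q '' (E : Set V))) (haJ : a ∈ J) :
    a ∈ cliffordLeftIdeal Q E := by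
  obtain ⟨r, hr⟩ := exists_sub_algebraMap_mem ha
  have hrJ : algebraMap K _ r ∈ J := (J.sub_mem_iff_right haJ).1 (hIJ hr)
  have hr0 : r = 0 := by
    by_contra hr0
    have h1 : (1 : CliffordAlgebra Q) ∈ J := by
      simpa [← map_mul, hr0] using J.smul_mem (algebraMap K _ r⁻¹) hrJ
    exact hJ ((Ideal.eq_top_iff_one J).2 h1)
  simpa [hr0] using hr

theorem mem_of_add_ι_mul_mem {s : Set V} {b c : CliffordAlgebra Q}
    (hb : b ∈ Algebra.adjoin K (ι Q '' s)) (hc : c ∈ Algebra.adjoin K (ι Q '' s)) {e w : V}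
    (he : e ∈ E) (hes : ∀ v ∈ s, Q.polarBilin e v = 0) (hew : Q.polarBilin e w ≠ 0)
    (hbc : b + ι Q w * c ∈ J) : c ∈ J := by
  have hcontract : contractLeft (Q.polarBilin e) (b + ι Q w * c) = Q.polarBilin e w • c := by
    rw [map_add, contractLeft_ι_mul, contractLeft_eq_zero_of_mem_adjoin hes hb,
      contractLeft_eq_zero_of_mem_adjoin hes hc, mul_zero, sub_zero, zero_add]
  have hmem := (J.sub_mem_iff_right (J.smul_mem (ι Q e) hbc)).1
    (hIJ (ι_mul_sub_contractLeft_mem he (b + ι Q w * c)))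
  rw [hcontract] at hmem
  exact ((J.restrictScalars K).smul_mem_iff hew).1 hmem

theorem mem_of_mem_adjoin_union_of_mem (hJ : J ≠ ⊤) (hE : E.orthogonalBilin Q.polarBilin = E)
    {t : Set V} (ht : t.Finite) {a : CliffordAlgebra Q}
    (ha : a ∈ Algebra.adjoin K (ι Q '' (E ∪ t))) (haJ : a ∈ J) : a ∈ cliffordLeftIdeal Q E := by
  induction t, ht using Set.Finite.induction_on generalizing a with
  | empty => exact mem_of_mem_adjoin_of_mem hIJ hJ (by rwa [Set.union_empty] at ha) haJ
  | @insert w t _ ht ih =>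
    rw [Set.union_insert] at ha
    by_cases hw : w ∈ E ⊔ Submodule.span K t
    · have hw' : w ∈ Submodule.span K (E ∪ t) := by rwa [Submodule.span_union, E.span_eq]
      exact ih (adjoin_ι_image_insert_le_of_mem_span hw' ha) haJ
    · obtain ⟨b, hb, c, hc, rfl⟩ := exists_add_ι_mul_eq_of_mem_adjoin_insert ha
      obtain ⟨e, he, het, hew⟩ :=
        exists_apply_ne_zero_of_notMem_orthogonalBilin_sup_span Q.polarBilin ht (hE.symm ▸ hw)
      have heEt : ∀ v ∈ (E ∪ t : Set V), Q.polarBilin e v = 0 := by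
        rintro v (hv | hv)
        · exact hE.ge hv e he
        · exact het v hv
      have hcJ : c ∈ J := mem_of_add_ι_mul_mem hIJ hb hc he heEt hew haJ
      have hwc : ι Q w * c ∈ cliffordLeftIdeal Q E := Submodule.smul_mem _ _ (ih hc hcJ)
      have hbJ : b ∈ J := (J.add_mem_iff_left (hIJ hwc)).1 haJ
      exact add_mem (ih hb hbJ) hwc

end cliffordLeftIdeal

theorem stmt10_general {K V : Type*} [Field K] [AddCommGroup V] [Module K V]
    {Q : QuadraticForm K V} {E : Submodule K V} (hQ : ∀ e ∈ E, Q e = 0)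
    (hE : E.orthogonalBilin Q.polarBilin ≤ E) :
    IsCoatom (Submodule.span (CliffordAlgebra Q) (ι Q '' (E : Set V))) := by
  have := nontrivial_cliffordAlgebra Q
  have hE' := hE.antisymm (le_orthogonalBilin_of_isotropic hQ)
  refine ⟨cliffordLeftIdeal.ne_top_of_isotropic hQ, fun J hIJ => ?_⟩
  by_contra hJ
  refine hIJ.not_ge fun a haJ => ?_
  obtain ⟨t, ht, hat⟩ := exists_finite_mem_adjoin_ι_image a
  exact cliffordLeftIdeal.mem_of_mem_adjoin_union_of_mem hIJ.le hJ hE' ht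
    (Algebra.adjoin_mono (Set.image_mono Set.subset_union_right) hat) haJ

end Clifford

/-- For a Lagrangian subspace `E` of a finite-dimensional split real
quadratic space `(W,B)` (Lagrangian: `E` equals its `B`-orthogonal complement), the
left ideal `Cl(W)·E` of the Clifford algebra generated by `E` is a maximal left ideal
(a coatom in the lattice of left ideals, i.e. of `Cl(W)`-submodules of `Cl(W)`).
Convention: `Q = (1/2) • B`, so `w² = (B w w / 2)·1` in `Cl(W)`. -/
theorem stmt10 {W : Type*} [AddCommGroup W] [Module ℝ W] [FiniteDimensional ℝ W]
    (B : LinearMap.BilinForm ℝ W) (hsymm : B.IsSymm) (hnd : B.Nondegenerate)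
    (E : Submodule ℝ W)
    (hLag : (E : Set W) = {w : W | ∀ e ∈ E, B w e = 0}) :
    IsCoatom
      (Submodule.span (CliffordAlgebra (((1/2 : ℝ) • B).toQuadraticMap))
        (CliffordAlgebra.ι (((1/2 : ℝ) • B).toQuadraticMap) '' (E : Set W))) := by
  have hpolar := polarBilin_half_smul_toQuadraticMap hsymm
  have hmem (w : W) : w ∈ E ↔ ∀ e ∈ E, B w e = 0 := Set.ext_iff.1 hLag w
  exact stmt10_general (fun e he => by simp [(hmem e).1 he e he])
    fun w hw => (hmem w).2 fun e he => (hsymm.eq w e).trans (hpolar ▸ hw e he)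
end

section
/- Let V be a finite-dimensional real vector space, E ⊂ 𝕍 = V ⊕ V* a Lagrangian subspace with range S = pr_V(E) and associated 2-form ω_S on S. Choose any extension ω of ω_S to a 2-form on V and a nonzero element μ of the top exterior power of ann(S) ⊂ V*. Then φ = e^{−ω} ∧ μ ∈ ΛV* is a pure spinor with null space N_φ = E, and φ is independent of the choice of extension ω. -/
set_option synthInstance.maxHeartbeats 1000000
set_option maxHeartbeats 1000000

open Module

/-- The canonical split pairing on `𝕍 = V ⊕ V*`. -/
def vPair {V : Type*} [AddCommGroup V] [Module ℝ V]
    (p q : V × Module.Dual ℝ V) : ℝ :=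
  p.2 q.1 + q.2 p.1

/-- The orthogonal complement of a set in `𝕍 = V ⊕ V*` for the canonical pairing. -/
def vPerp {V : Type*} [AddCommGroup V] [Module ℝ V]
    (S : Set (V × Module.Dual ℝ V)) : Set (V × Module.Dual ℝ V) :=
  {w | ∀ e ∈ S, vPair w e = 0}

/-- The contravariant spinor action of `𝕍 = V ⊕ V*` on `ΛV*`:
`ρ(v ⊕ α)φ = α ∧ φ + ι_v φ`. -/
noncomputable def rho {V : Type*} [AddCommGroup V] [Module ℝ V]
    (w : V × Module.Dual ℝ V) (φ : ExteriorAlgebra ℝ (Module.Dual ℝ V)) :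
    ExteriorAlgebra ℝ (Module.Dual ℝ V) :=
  ExteriorAlgebra.ι ℝ w.2 * φ +
    CliffordAlgebra.contractLeft (Module.Dual.eval ℝ V w.1) φ

/-- The null space `N_φ = {w ∈ 𝕍 : ρ(w)φ = 0}` of a spinor `φ ∈ ΛV*`. -/
def nullSet {V : Type*} [AddCommGroup V] [Module ℝ V]
    (φ : ExteriorAlgebra ℝ (Module.Dual ℝ V)) : Set (V × Module.Dual ℝ V) :=
  {w | rho w φ = 0}

/-- The spinor `e^{−ω} ∧ μ ∈ ΛV*`, where `ω` is (the exterior-algebra incarnation of) a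
2-form on `V` and `μ = b₁ ∧ ⋯ ∧ b_k`. -/
noncomputable def expSpinor {V : Type*} [AddCommGroup V] [Module ℝ V]
    [FiniteDimensional ℝ V] (ωel : ExteriorAlgebra ℝ (Module.Dual ℝ V))
    {k : ℕ} (b : Fin k → Module.Dual ℝ V) : ExteriorAlgebra ℝ (Module.Dual ℝ V) :=
  (∑ j ∈ Finset.range (Module.finrank ℝ V + 1),
      ((-1 : ℝ) ^ j / (j.factorial : ℝ)) • ωel ^ j) *
    (List.ofFn fun i : Fin k => ExteriorAlgebra.ι ℝ (b i)).prod

/-!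
Multiplication by `e^a`, for `a` an even nilpotent form, intertwines the spinor action with the
B-field transform `(v, α) ↦ (v, α + ι_v a)` of `𝕍`. The transform by `-ω` carries `E` into
`S ⊕ ann(S)`, which annihilates `μ`, so `E ⊆ N_φ`. By the Clifford relation the null space of a
nonzero spinor is isotropic, and a Lagrangian subspace contained in an isotropic one equals it.

Two extensions of `ω_S` differ by a 2-form `η` with `ι_v η ∈ ann(S)` for `v ∈ S`. Euler's identity
`∑ eᵢ ∧ ι_{eⁱ} η = 2η` in a basis of `V*` adapted to `ann(S)` gives `η ∧ μ = 0`, hence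
`e^{-η} ∧ μ = μ`.
-/

section CliffordAlgebra

open CliffordAlgebra

variable {R M : Type*} [CommRing R] [AddCommGroup M] [Module R M] {Q : QuadraticForm R M}

theorem contractLeft_mul (d : Dual R M) (a b : CliffordAlgebra Q) :
    contractLeft d (a * b) = contractLeft d a * b + involute a * contractLeft d b := by
  induction a using CliffordAlgebra.left_induction with
  | algebraMap r => simp [contractLeft_algebraMap_mul, contractLeft_algebraMap]
  | add a a' ha ha' =>
    simp only [add_mul, map_add, ha, ha']
    abel
  | ι_mul a x ha =>
    simp only [mul_assoc, contractLeft_ι_mul, ha, map_mul, involute_ι, sub_mul, mul_add,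
      neg_mul, smul_mul_assoc]
    abel

end CliffordAlgebra

section ExteriorAlgebra

open CliffordAlgebra (contractLeft involute)
open ExteriorAlgebra (ι ιMulti)

section CommRing

variable {R M : Type*} [CommRing R] [AddCommGroup M] [Module R M]

theorem ι_mul_eq_involute_mul_ι (x : M) (a : ExteriorAlgebra R M) :
    ι R x * a = involute a * ι R x := by
  induction a using ExteriorAlgebra.induction with
  | algebraMap r => simp [Algebra.commutes]
  | ι y =>
    rw [CliffordAlgebra.involute_ι, neg_mul]
    exact eq_neg_of_add_eq_zero_left (ExteriorAlgebra.ι_add_mul_swap x y)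
  | mul a b ha hb => rw [map_mul, ← mul_assoc, ha, mul_assoc, hb, mul_assoc]
  | add a b ha hb => rw [map_add, mul_add, ha, hb, add_mul]

theorem commute_of_involute_eq {a : ExteriorAlgebra R M} (ha : involute a = a)
    (b : ExteriorAlgebra R M) : Commute a b := by
  induction b using ExteriorAlgebra.induction with
  | algebraMap r => exact Algebra.commute_algebraMap_right r a
  | ι x => exact ((ι_mul_eq_involute_mul_ι x a).trans (by rw [ha])).symm
  | mul b c hb hc => exact hb.mul_right hc
  | add b c hb hc => exact hb.add_right hc

theorem involute_eq_of_mem_exteriorPower {n : ℕ} (hn : Even n) {a : ExteriorAlgebra R M}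
    (ha : a ∈ ⋀[R]^n M) : involute a = a :=
  CliffordAlgebra.involute_eq_of_mem_even <|
    Submodule.mem_iSup_of_mem ⟨n, (ZMod.natCast_eq_zero_iff_even).mpr hn⟩ ha

theorem contractLeft_ιMulti_eq_zero (d : Dual R M) {k : ℕ} {b : Fin k → M}
    (hd : ∀ i, d (b i) = 0) : contractLeft d (ιMulti R k b) = 0 := by
  induction k with
  | zero => rw [ExteriorAlgebra.ιMulti_zero_apply, CliffordAlgebra.contractLeft_one]
  | succ k ih =>
    rw [ExteriorAlgebra.ιMulti_succ_apply, CliffordAlgebra.contractLeft_ι_mul, hd,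
      ih (b := Matrix.vecTail b) fun i => hd i.succ, zero_smul, mul_zero, sub_zero]

theorem ι_mul_ιMulti_eq_zero {k : ℕ} {b : Fin k → M} {x : M}
    (hx : x ∈ Submodule.span R (Set.range b)) : ι R x * ιMulti R k b = 0 := by
  suffices Submodule.span R (Set.range b) ≤
      LinearMap.ker (LinearMap.mulRight R (ιMulti R k b) ∘ₗ ι R) from this hx
  rw [Submodule.span_le]
  rintro _ ⟨i, rfl⟩
  exact ExteriorAlgebra.ι_mul_prod_list b i

theorem sum_ι_mul_contractLeft_coord {I : Type*} [Fintype I] (e : Basis I R M) {n : ℕ}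
    {a : ExteriorAlgebra R M} (ha : a ∈ ⋀[R]^n M) :
    ∑ i, ι R (e i) * contractLeft (e.coord i) a = n • a := by
  induction ha using Submodule.pow_induction_on_left' with
  | algebraMap r => simp [CliffordAlgebra.contractLeft_algebraMap]
  | add a a' n _ _ ha ha' =>
    simp only [map_add, mul_add, Finset.sum_add_distrib, ha, ha', nsmul_add]
  | mem_mul m hm n a _ ha =>
    obtain ⟨x, rfl⟩ := hm
    have hx : ∑ i, ι R (e i) * (e.coord i x • a) = ι R x * a := by
      simp_rw [mul_smul_comm, ← smul_mul_assoc, ← Finset.sum_mul, ← map_smul, ← map_sum,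
        Basis.coord_apply, e.sum_repr]
    have hswap (i : I) : ι R (e i) * (ι R x * contractLeft (e.coord i) a) =
        -(ι R x * (ι R (e i) * contractLeft (e.coord i) a)) := by
      rw [← mul_assoc, ← mul_assoc, ← neg_mul,
        eq_neg_of_add_eq_zero_left (ExteriorAlgebra.ι_add_mul_swap (e i) x)]
    simp_rw [CliffordAlgebra.contractLeft_ι_mul, mul_sub, hswap, Finset.sum_sub_distrib,
      Finset.sum_neg_distrib, ← Finset.mul_sum, ha]
    rw [hx, sub_neg_eq_add, mul_smul_comm, succ_nsmul']

end CommRing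

section Field

variable {K M : Type*} [Field K] [AddCommGroup M] [Module K M]

theorem ιMulti_ne_zero {k : ℕ} {b : Fin k → M} (hb : LinearIndependent K b) :
    ιMulti K k b ≠ 0 := by
  have h := (exteriorPower.ιMulti_family_linearIndependent_field (n := k) hb).ne_zero
    (Set.powersetCard.ofFinEmbEquiv (RelEmbedding.refl _))
  rw [exteriorPower.ιMulti_family, Equiv.symm_apply_apply] at h
  exact fun h0 => h (Subtype.ext h0)

variable [FiniteDimensional K M]

theorem pow_eq_zero_of_mem_exteriorPower {n m : ℕ} (h : finrank K M < n * m)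
    {a : ExteriorAlgebra K M} (ha : a ∈ ⋀[K]^n M) : a ^ m = 0 := by
  have hmem : a ^ m ∈ ⋀[K]^(n * m) M := by
    rw [ExteriorAlgebra.exteriorPower, pow_mul]
    exact Submodule.pow_mem_pow _ ha _
  have hbot : ⋀[K]^(n * m) M = ⊥ := by
    rw [← Submodule.finrank_eq_zero, exteriorPower.finrank_eq, Nat.choose_eq_zero_of_lt h]
  rwa [hbot, Submodule.mem_bot] at hmem

theorem isNilpotent_of_mem_exteriorPower {n : ℕ} (hn : 0 < n) {a : ExteriorAlgebra K M}
    (ha : a ∈ ⋀[K]^n M) : IsNilpotent a :=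
  ⟨finrank K M + 1, pow_eq_zero_of_mem_exteriorPower
    ((Nat.lt_succ_self _).trans_le (Nat.le_mul_of_pos_left _ hn)) ha⟩

theorem mul_ιMulti_eq_zero_of_contractLeft {n : ℕ} (hn : (n : K) ≠ 0) {a : ExteriorAlgebra K M}
    (ha : a ∈ ⋀[K]^n M) {k : ℕ} {b : Fin k → M}
    (h : ∀ d : Dual K M, (∀ i, d (b i) = 0) → contractLeft d a * ιMulti K k b = 0) :
    a * ιMulti K k b = 0 := by
  set N := Submodule.span K (Set.range b)
  obtain ⟨N', hN⟩ := N.exists_isCompl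
  let e := ((finBasis K N).prod (finBasis K N')).map (N.prodEquivOfIsCompl N' hN)
  suffices (n : K) • (a * ιMulti K k b) = 0 from (smul_eq_zero.mp this).resolve_left hn
  rw [← smul_mul_assoc, Nat.cast_smul_eq_nsmul, ← sum_ι_mul_contractLeft_coord e ha,
    Finset.sum_mul]
  refine Finset.sum_eq_zero fun i _ => ?_
  rcases i with i | i
  · have hi : e (.inl i) ∈ N := by simp [e]
    rw [ι_mul_eq_involute_mul_ι, mul_assoc, ι_mul_ιMulti_eq_zero hi, mul_zero]
  · have hi (j : Fin k) : e.coord (.inr i) (b j) = 0 := by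
      have hj : b j ∈ N := Submodule.subset_span (Set.mem_range_self j)
      have hsymm := Submodule.prodEquivOfIsCompl_symm_apply_left N N' hN ⟨b j, hj⟩
      simp [e, hsymm]
    rw [mul_assoc, h _ hi, mul_zero]

end Field

section Dual

variable {K V I : Type*} [Field K] [AddCommGroup V] [Module K V] {S : Submodule K V}

theorem forall_apply_eq_zero_iff_mem {b : I → Dual K V}
    (hb : Submodule.span K (Set.range b) = S.dualAnnihilator) {v : V} :
    (∀ i, b i v = 0) ↔ v ∈ S := by
  rw [← Subspace.dualAnnihilator_dualCoannihilator_eq (W := S), ← hb, ← SetLike.mem_coe,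
    Submodule.coe_dualCoannihilator_span, Set.mem_ofPred_eq, Set.forall_mem_range]

theorem mul_ιMulti_eq_zero_of_contractLeft_eval [FiniteDimensional K V] {n : ℕ}
    (hn : (n : K) ≠ 0) {a : ExteriorAlgebra K (Dual K V)} (ha : a ∈ ⋀[K]^n (Dual K V)) {k : ℕ}
    {b : Fin k → Dual K V} (hb : Submodule.span K (Set.range b) = S.dualAnnihilator)
    (h : ∀ v ∈ S, contractLeft (Dual.eval K V v) a * ιMulti K k b = 0) :
    a * ιMulti K k b = 0 := by
  refine mul_ιMulti_eq_zero_of_contractLeft hn ha fun d hd => ?_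
  obtain ⟨v, rfl⟩ := (evalEquiv K V).surjective d
  exact h v ((forall_apply_eq_zero_iff_mem hb).mp hd)

end Dual

end ExteriorAlgebra

section Exp

open IsNilpotent (exp)

variable {A : Type*} [Ring A] {a : A}

theorem map_pow_mul_of_leibniz {D : A → A} (hcomm : Commute a (D a))
    (hD : ∀ x, D (a * x) = D a * x + a * D x) (n : ℕ) (x : A) :
    D (a ^ n * x) = n • (a ^ (n - 1) * (D a * x)) + a ^ n * D x := by
  induction n with
  | zero => simp
  | succ n ih =>
    have hpow : a * (n • (a ^ (n - 1) * (D a * x))) = n • (a ^ n * (D a * x)) := by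
      cases n with
      | zero => simp only [zero_smul, mul_zero]
      | succ n => rw [mul_smul_comm, ← mul_assoc, ← pow_succ', add_tsub_cancel_right]
    rw [pow_succ', mul_assoc, hD, ih, mul_add, hpow, ← mul_assoc (D a),
      ← (hcomm.pow_left n).eq, mul_assoc (a ^ n), ← mul_assoc a, add_tsub_cancel_right,
      succ_nsmul']
    abel

theorem map_exp_mul_of_leibniz [Module ℚ A] {F : Type*} [FunLike F A A]
    [AddMonoidHomClass F A A] {D : F} (ha : IsNilpotent a) (hcomm : Commute a (D a))
    (hD : ∀ x, D (a * x) = D a * x + a * D x) (x : A) :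
    D (exp a * x) = exp a * (D a * x + D x) := by
  obtain ⟨n, hn⟩ := ha
  have hshift : ∑ i ∈ Finset.range (n + 1), (i.factorial : ℚ)⁻¹ • i • (a ^ (i - 1) * (D a * x)) =
      exp a * (D a * x) := by
    rw [Finset.sum_range_succ', IsNilpotent.exp_eq_sum hn, Finset.sum_mul]
    simp only [zero_smul, smul_zero, add_zero]
    refine Finset.sum_congr rfl fun i _ => ?_
    rw [← Nat.cast_smul_eq_nsmul ℚ, smul_smul, smul_mul_assoc, Nat.factorial_succ, Nat.cast_mul,
      mul_inv_rev, inv_mul_cancel_right₀ (by positivity), add_tsub_cancel_right]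
  have hexp := IsNilpotent.exp_eq_sum (pow_eq_zero_of_le n.le_succ hn)
  rw [mul_add, ← hshift, hexp, Finset.sum_mul, Finset.sum_mul, map_sum, ← Finset.sum_add_distrib]
  refine Finset.sum_congr rfl fun i _ => ?_
  rw [smul_mul_assoc, map_rat_smul, map_pow_mul_of_leibniz hcomm hD, smul_add, smul_mul_assoc]

end Exp

section Spinor

open CliffordAlgebra (contractLeft involute)
open ExteriorAlgebra (ι ιMulti)
open IsNilpotent (exp)

variable {V : Type*} [AddCommGroup V] [Module ℝ V] {k : ℕ} {b : Fin k → Dual ℝ V}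
  {a φ : ExteriorAlgebra ℝ (Dual ℝ V)}

theorem rho_zero (w : V × Dual ℝ V) : rho w 0 = 0 := by
  rw [rho, mul_zero, map_zero, add_zero]

theorem rho_rho_add_rho_rho (w e : V × Dual ℝ V) (φ : ExteriorAlgebra ℝ (Dual ℝ V)) :
    rho w (rho e φ) + rho e (rho w φ) = vPair w e • φ := by
  have hι : ι ℝ w.2 * (ι ℝ e.2 * φ) = -(ι ℝ e.2 * (ι ℝ w.2 * φ)) := by
    rw [← mul_assoc, ← mul_assoc, ← neg_mul,
      eq_neg_of_add_eq_zero_left (ExteriorAlgebra.ι_add_mul_swap w.2 e.2)]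
  have hcontract := CliffordAlgebra.contractLeft_comm (Dual.eval ℝ V w.1) (Dual.eval ℝ V e.1) φ
  simp only [rho, map_add, mul_add, CliffordAlgebra.contractLeft_ι_mul, Dual.eval_apply]
  rw [hι, hcontract, vPair, add_smul]
  abel

theorem nullSet_subset_vPerp (hφ : φ ≠ 0) : nullSet φ ⊆ vPerp (nullSet φ) := by
  intro w hw e he
  have h := rho_rho_add_rho_rho w e φ
  rw [show rho w φ = 0 from hw, show rho e φ = 0 from he, rho_zero, rho_zero, add_zero] at h
  exact (smul_eq_zero.mp h.symm).resolve_right hφ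

theorem vPerp_anti {S T : Set (V × Dual ℝ V)} (h : S ⊆ T) : vPerp T ⊆ vPerp S :=
  fun _ hw e he => hw e (h he)

theorem nullSet_eq_of_subset {L : Set (V × Dual ℝ V)} (hL : L = vPerp L) (hφ : φ ≠ 0)
    (h : L ⊆ nullSet φ) : nullSet φ = L :=
  (((nullSet_subset_vPerp hφ).trans (vPerp_anti h)).trans hL.superset).antisymm h

theorem rho_ιMulti_eq_zero {w : V × Dual ℝ V} (hv : ∀ i, b i w.1 = 0)
    (hα : w.2 ∈ Submodule.span ℝ (Set.range b)) : rho w (ιMulti ℝ k b) = 0 := by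
  rw [rho, ι_mul_ιMulti_eq_zero hα, contractLeft_ιMulti_eq_zero _ hv, add_zero]

theorem rho_exp_mul (hnil : IsNilpotent a) (heven : involute a = a) {w : V × Dual ℝ V}
    {β : Dual ℝ V} (hβ : contractLeft (Dual.eval ℝ V w.1) a = ι ℝ β)
    (ψ : ExteriorAlgebra ℝ (Dual ℝ V)) :
    rho w (exp a * ψ) = exp a * rho (w.1, w.2 + β) ψ := by
  have hcomm := commute_of_involute_eq heven
  have hcontract : contractLeft (Dual.eval ℝ V w.1) (exp a * ψ) =
      exp a * (ι ℝ β * ψ + contractLeft (Dual.eval ℝ V w.1) ψ) := by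
    rw [← hβ]
    refine map_exp_mul_of_leibniz hnil (hcomm _) (fun x => ?_) ψ
    rw [contractLeft_mul, heven]
  have hexp : Commute (exp a) (ι ℝ w.2) :=
    Commute.sum_left _ _ _ fun i _ => ((hcomm _).pow_left i).smul_left _
  rw [rho, rho, hcontract, ← mul_assoc, ← hexp.eq, mul_assoc, ← mul_add, map_add, add_mul,
    add_assoc]

variable [FiniteDimensional ℝ V]

theorem expSpinor_eq_exp_neg_mul (ha : a ∈ ⋀[ℝ]^2 (Dual ℝ V)) :
    expSpinor a b = exp (-a) * ιMulti ℝ k b := by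
  have hpow : (-a) ^ (finrank ℝ V + 1) = 0 :=
    pow_eq_zero_of_mem_exteriorPower (by rw [Subspace.dual_finrank_eq]; lia) (neg_mem ha)
  rw [expSpinor, IsNilpotent.exp_eq_sum hpow, ExteriorAlgebra.ιMulti_apply]
  refine congrArg (· * _) (Finset.sum_congr rfl fun j _ => ?_)
  rw [inv_natCast_smul_eq ℚ ℝ, ← neg_one_smul ℝ a, smul_pow, smul_smul, div_eq_inv_mul]

theorem expSpinor_ne_zero (ha : a ∈ ⋀[ℝ]^2 (Dual ℝ V)) (hb : LinearIndependent ℝ b) :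
    expSpinor a b ≠ 0 := by
  have hunit := IsNilpotent.isUnit_exp (isNilpotent_of_mem_exteriorPower two_pos (neg_mem ha))
  rw [expSpinor_eq_exp_neg_mul ha, Ne, hunit.mul_right_eq_zero]
  exact ιMulti_ne_zero hb

theorem rho_expSpinor_eq_zero (ha : a ∈ ⋀[ℝ]^2 (Dual ℝ V)) {w : V × Dual ℝ V} {β : Dual ℝ V}
    (hβ : contractLeft (Dual.eval ℝ V w.1) a = ι ℝ β) (hv : ∀ i, b i w.1 = 0)
    (hα : w.2 - β ∈ Submodule.span ℝ (Set.range b)) : rho w (expSpinor a b) = 0 := by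
  have hβ' : contractLeft (Dual.eval ℝ V w.1) (-a) = ι ℝ (-β) := by rw [map_neg, hβ, map_neg]
  have hμ : rho (w.1, w.2 - β) (ιMulti ℝ k b) = 0 := rho_ιMulti_eq_zero hv hα
  rw [expSpinor_eq_exp_neg_mul ha,
    rho_exp_mul (isNilpotent_of_mem_exteriorPower two_pos (neg_mem ha))
      (involute_eq_of_mem_exteriorPower even_two (neg_mem ha)) hβ',
    ← sub_eq_add_neg, hμ, mul_zero]

theorem expSpinor_eq_of_sub_mul_ιMulti_eq_zero {a' : ExteriorAlgebra ℝ (Dual ℝ V)}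
    (ha' : a' ∈ ⋀[ℝ]^2 (Dual ℝ V)) (ha : a ∈ ⋀[ℝ]^2 (Dual ℝ V))
    (h : (a' - a) * ιMulti ℝ k b = 0) : expSpinor a' b = expSpinor a b := by
  have hsub : a - a' ∈ ⋀[ℝ]^2 (Dual ℝ V) := sub_mem ha ha'
  have hnil_neg : IsNilpotent (-a) := isNilpotent_of_mem_exteriorPower two_pos (neg_mem ha)
  have hnil_sub : IsNilpotent (a - a') := isNilpotent_of_mem_exteriorPower two_pos hsub
  have hcomm : Commute (-a) (a - a') :=
    commute_of_involute_eq (involute_eq_of_mem_exteriorPower even_two (neg_mem ha)) _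
  have hfix : exp (a - a') * ιMulti ℝ k b = ιMulti ℝ k b := by
    have h1 : (a - a') ^ 1 • ιMulti ℝ k b = 0 := by
      rw [pow_one, smul_eq_mul, ← neg_sub, neg_mul, h, neg_zero]
    simpa using IsNilpotent.exp_smul_eq_sum h1 hnil_sub
  calc expSpinor a' b = exp (-a + (a - a')) * ιMulti ℝ k b := by
        rw [expSpinor_eq_exp_neg_mul ha', neg_add_eq_sub, sub_sub_cancel_left]
    _ = exp (-a) * (exp (a - a') * ιMulti ℝ k b) := by
        rw [IsNilpotent.exp_add_of_commute hcomm hnil_neg hnil_sub, mul_assoc]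
    _ = expSpinor a b := by rw [hfix, expSpinor_eq_exp_neg_mul ha]

end Spinor

/-- Let `E ⊂ 𝕍 = V ⊕ V*` be a Lagrangian subspace with range
`S = pr_V(E)`, let `ω` be any alternating 2-form on `V` extending the canonical 2-form
`ω_S` of `E` (i.e. `ω(v₁,v₂) = α₁(v₂)` for `vᵢ ⊕ αᵢ ∈ E`), represented by the degree-2
element `ωel ∈ Λ²V*` (characterized by `ι_v ωel = ω(v,·)` for all `v`), and let
`μ = b₁ ∧ ⋯ ∧ b_k ≠ 0` where `b` is a basis of `ann(S)`.  Then `φ = e^{−ω} ∧ μ` is a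
pure spinor with `N_φ = E`, and `φ` is independent of the chosen extension `ω`. -/
theorem stmt17 {V : Type*} [AddCommGroup V] [Module ℝ V] [FiniteDimensional ℝ V]
    (E : Submodule ℝ (V × Module.Dual ℝ V))
    (hE : (E : Set (V × Module.Dual ℝ V)) = vPerp (E : Set _))
    (ω : V →ₗ[ℝ] V →ₗ[ℝ] ℝ) (halt : ∀ v, ω v v = 0)
    (hext : ∀ p ∈ E, ∀ q ∈ E, ω (Prod.fst p) (Prod.fst q) = Prod.snd p (Prod.fst q))
    (ωel : ExteriorAlgebra ℝ (Module.Dual ℝ V))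
    (hdeg : ωel ∈ ⋀[ℝ]^2 (Module.Dual ℝ V))
    (hcontr : ∀ v : V,
      CliffordAlgebra.contractLeft (Module.Dual.eval ℝ V v) ωel =
        ExteriorAlgebra.ι ℝ (ω v))
    {k : ℕ} (b : Fin k → Module.Dual ℝ V) (hli : LinearIndependent ℝ b)
    (hb : Submodule.span ℝ (Set.range b) =
      Submodule.dualAnnihilator (E.map (LinearMap.fst ℝ V (Module.Dual ℝ V)))) :
    expSpinor ωel b ≠ 0 ∧
    nullSet (expSpinor ωel b) = (E : Set (V × Module.Dual ℝ V)) ∧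
    (∀ (ω' : V →ₗ[ℝ] V →ₗ[ℝ] ℝ), (∀ v, ω' v v = 0) →
      (∀ p ∈ E, ∀ q ∈ E, ω' (Prod.fst p) (Prod.fst q) = Prod.snd p (Prod.fst q)) →
      ∀ ωel' : ExteriorAlgebra ℝ (Module.Dual ℝ V),
        ωel' ∈ ⋀[ℝ]^2 (Module.Dual ℝ V) →
        (∀ v : V,
          CliffordAlgebra.contractLeft (Module.Dual.eval ℝ V v) ωel' =
            ExteriorAlgebra.ι ℝ (ω' v)) →
        expSpinor ωel' b = expSpinor ωel b) := by
  set S := E.map (LinearMap.fst ℝ V (Dual ℝ V))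
  have hne := expSpinor_ne_zero hdeg hli
  refine ⟨hne, nullSet_eq_of_subset hE hne fun w hw => ?_, ?_⟩
  · have hv : w.1 ∈ S := Submodule.mem_map_of_mem hw
    have hα : w.2 - ω w.1 ∈ Submodule.span ℝ (Set.range b) := by
      rw [hb, Submodule.mem_dualAnnihilator]
      rintro _ ⟨q, hq, rfl⟩
      simp [hext w hw q hq]
    exact rho_expSpinor_eq_zero hdeg (hcontr w.1) ((forall_apply_eq_zero_iff_mem hb).mpr hv) hα
  · intro ω' _ hext' ωel' hdeg' hcontr'
    refine expSpinor_eq_of_sub_mul_ιMulti_eq_zero hdeg' hdeg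
      (mul_ιMulti_eq_zero_of_contractLeft_eval two_ne_zero (sub_mem hdeg' hdeg) hb ?_)
    rintro _ ⟨p, hp, rfl⟩
    rw [map_sub, hcontr', hcontr, ← map_sub]
    refine ι_mul_ιMulti_eq_zero ?_
    rw [hb, Submodule.mem_dualAnnihilator]
    rintro _ ⟨q, hq, rfl⟩
    simp [hext p hp q hq, hext' p hp q hq]
end
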